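/- (Power means) Let A₁, …, Aₙ be m×m positive definite complex matrices, let w = (w₁, …, wₙ) be a weight (wᵢ > 0, Σᵢ wᵢ = 1), and let t ∈ (0,1]. Then the equation X = Σᵢ wᵢ (X #_t Aᵢ) has a unique positive definite solution X (the t-weighted power mean P_t(w; A₁, …, Aₙ)). -/

import Mathlib

/-!
The identity `x #_t a = a #_{1-t} x` moves the unknown into the second argument. There, for
`t ∈ (0, 1]`, the mean is monotone (the Löwner–Heinz inequality) and homogeneous of degree `1 - t`.
Hence `x ↦ ∑ i, w i • (x #_t a i)` is a strict contraction for Thompson's metric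
`d x y = inf {r | x ≤ exp r • y ∧ y ≤ exp r • x}` on the strictly positive cone of a C⋆-algebra.
The metric is finite and the cone is complete for it, so Banach's argument yields a unique fixed
point. Inversion preserves the metric, which gives the contraction factor `|1 - t|` for every
`t ∈ (0, 2)`.
-/

open Matrix
open scoped ComplexOrder

noncomputable def matFun {m : ℕ} (f : ℝ → ℝ) (A : Matrix (Fin m) (Fin m) ℂ) :
    Matrix (Fin m) (Fin m) ℂ :=
  if hA : A.IsHermitian then
    (hA.eigenvectorUnitary : Matrix (Fin m) (Fin m) ℂ) *
      Matrix.diagonal (fun i => (f (hA.eigenvalues i) : ℂ)) *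
      (star (hA.eigenvectorUnitary : Matrix (Fin m) (Fin m) ℂ))
  else 0

/-- The unique positive definite square root of a positive definite matrix
(realized via the spectral decomposition). -/
noncomputable def msqrt {m : ℕ} (A : Matrix (Fin m) (Fin m) ℂ) : Matrix (Fin m) (Fin m) ℂ :=
  matFun Real.sqrt A

/-- The logarithm of a positive definite matrix: the unique Hermitian `L` with `exp L = A`. -/
noncomputable def mlog {m : ℕ} (A : Matrix (Fin m) (Fin m) ℂ) : Matrix (Fin m) (Fin m) ℂ :=
  matFun Real.log A

/-- The real power `A ^ t` of a positive definite matrix, via the spectral decomposition. -/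
noncomputable def mpow {m : ℕ} (A : Matrix (Fin m) (Fin m) ℂ) (t : ℝ) : Matrix (Fin m) (Fin m) ℂ :=
  matFun (fun x => x ^ t) A

/-- The matrix geometric mean `A # B`. -/
noncomputable def gmean {m : ℕ} (A B : Matrix (Fin m) (Fin m) ℂ) : Matrix (Fin m) (Fin m) ℂ :=
  msqrt A * msqrt ((msqrt A)⁻¹ * B * (msqrt A)⁻¹) * msqrt A

/-- The weighted geometric mean `A #_t B`. -/
noncomputable def wgmean {m : ℕ} (A B : Matrix (Fin m) (Fin m) ℂ) (t : ℝ) :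
    Matrix (Fin m) (Fin m) ℂ :=
  msqrt A * mpow ((msqrt A)⁻¹ * B * (msqrt A)⁻¹) t * msqrt A

/-- The Frobenius (Hilbert–Schmidt) norm `‖X‖₂ = (Tr(X*X))^{1/2}`. -/
noncomputable def fnorm {m : ℕ} (X : Matrix (Fin m) (Fin m) ℂ) : ℝ :=
  Real.sqrt ((Xᴴ * X).trace.re)

/-- The Riemannian metric `δ(A,B) = ‖log(A^{-1/2} B A^{-1/2})‖₂`. -/
noncomputable def rdist {m : ℕ} (A B : Matrix (Fin m) (Fin m) ℂ) : ℝ :=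
  fnorm (mlog ((msqrt A)⁻¹ * B * (msqrt A)⁻¹))

/-- The Loewner order: `A ≤ B` iff `B - A` is positive semidefinite. -/
def Loewner {m : ℕ} (A B : Matrix (Fin m) (Fin m) ℂ) : Prop :=
  (B - A).PosSemidef

section Order

open Filter Topology

variable {E : Type*} [AddCommGroup E] [PartialOrder E] [Module ℝ E]

/-- Thompson's metric `d` on the positive cone satisfies `d x y ≤ r`. Working with this
relation avoids forming the infimum over `r`, which would be `0` where no such `r` exists. -/
def ThompsonDistLE (r : ℝ) (x y : E) : Prop :=
  x ≤ Real.exp r • y ∧ y ≤ Real.exp r • x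

namespace ThompsonDistLE

variable {r s : ℝ} {x y z : E}

lemma symm (h : ThompsonDistLE r x y) : ThompsonDistLE r y x :=
  And.symm h

section OrderedModule

variable [PosSMulMono ℝ E]

lemma trans (hxy : ThompsonDistLE r x y) (hyz : ThompsonDistLE s y z) :
    ThompsonDistLE (r + s) x z := by
  constructor
  · calc x ≤ Real.exp r • y := hxy.1
      _ ≤ Real.exp r • Real.exp s • z := by gcongr; exact hyz.1
      _ = Real.exp (r + s) • z := by rw [smul_smul, Real.exp_add]
  · calc z ≤ Real.exp s • y := hyz.2
      _ ≤ Real.exp s • Real.exp r • x := by gcongr; exact hxy.2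
      _ = Real.exp (r + s) • x := by rw [smul_smul, Real.exp_add, mul_comm]

lemma exp_neg_smul_le (h : ThompsonDistLE r x y) : Real.exp (-r) • x ≤ y := by
  rw [Real.exp_neg, inv_smul_le_iff_of_pos (Real.exp_pos r)]
  exact h.1

end OrderedModule

lemma map {F : Type*} [AddCommGroup F] [PartialOrder F] [Module ℝ F] (f : E →ₗ[ℝ] F)
    (hf : Monotone f) (h : ThompsonDistLE r x y) : ThompsonDistLE r (f x) (f y) := by
  simp only [ThompsonDistLE, ← map_smul]
  exact ⟨hf h.1, hf h.2⟩

lemma sum_smul [PosSMulMono ℝ E] [IsOrderedAddMonoid E] {ι : Type*} {t : Finset ι} {w : ι → ℝ}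
    {x y : ι → E} (hw : ∀ i ∈ t, 0 ≤ w i) (h : ∀ i ∈ t, ThompsonDistLE r (x i) (y i)) :
    ThompsonDistLE r (∑ i ∈ t, w i • x i) (∑ i ∈ t, w i • y i) := by
  simp only [ThompsonDistLE, Finset.smul_sum, smul_comm (Real.exp r)]
  exact ⟨Finset.sum_le_sum fun i hi => smul_le_smul_of_nonneg_left (h i hi).1 (hw i hi),
    Finset.sum_le_sum fun i hi => smul_le_smul_of_nonneg_left (h i hi).2 (hw i hi)⟩

lemma refl [SMulPosMono ℝ E] (hr : 0 ≤ r) (hx : 0 ≤ x) : ThompsonDistLE r x x := by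
  have : x ≤ Real.exp r • x := by
    simpa only [one_smul] using smul_le_smul_of_nonneg_right (Real.one_le_exp hr) hx
  exact ⟨this, this⟩

lemma of_tendsto [TopologicalSpace E] [OrderClosedTopology E] [ContinuousConstSMul ℝ E]
    {y : ℕ → E} (hy : Tendsto y atTop (𝓝 z))
    (h : ∀ᶠ n in atTop, ThompsonDistLE r x (y n)) : ThompsonDistLE r x z :=
  ⟨ge_of_tendsto (hy.const_smul (Real.exp r)) (h.mono fun _ hn => hn.1),
    le_of_tendsto hy (h.mono fun _ hn => hn.2)⟩

lemma eq_of_tendsto_zero [TopologicalSpace E] [OrderClosedTopology E] [ContinuousSMul ℝ E]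
    {ε : ℕ → ℝ} (hε : Tendsto ε atTop (𝓝 0))
    (h : ∀ n, ThompsonDistLE (ε n) x y) : x = y := by
  have exp_smul_tendsto (z : E) :
      Tendsto (fun n => Real.exp (ε n) • z) atTop (𝓝 z) := by
    simpa using (Real.continuous_exp.tendsto' 0 1 Real.exp_zero |>.comp hε).smul_const z
  exact le_antisymm (ge_of_tendsto' (exp_smul_tendsto y) fun n => (h n).1)
    (ge_of_tendsto' (exp_smul_tendsto x) fun n => (h n).2)

end ThompsonDistLE

end Order

section Powers

open scoped Ring

variable {B : Type*} [CStarAlgebra B] [PartialOrder B]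

lemma continuousOn_rpow_spectrum {a : B} (ha : IsStrictlyPositive a) (s : ℝ) :
    ContinuousOn (fun r : ℝ => r ^ s) (spectrum ℝ a) :=
  continuousOn_id.rpow_const fun _ hr =>
    Or.inl (ne_of_mem_of_not_mem hr (spectrum.zero_notMem ℝ ha.isUnit))

variable [StarOrderedRing B]

lemma smul_rpow {c : ℝ} (hc : 0 < c) {a : B} (ha : IsStrictlyPositive a) (s : ℝ) :
    (c • a) ^ s = c ^ s • a ^ s := by
  have spectrum_pos : ∀ r ∈ spectrum ℝ a, 0 < r :=
    (StarOrderedRing.isStrictlyPositive_iff_spectrum_pos a).1 ha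
  calc (c • a) ^ s = cfc (fun r : ℝ => c * r) a ^ s := by rw [cfc_const_mul_id c a]
    _ = cfc (fun r : ℝ => (c * r) ^ s) a :=
      CFC.cfc_rpow fun r hr => mul_pos hc (spectrum_pos r hr)
    _ = cfc (fun r : ℝ => c ^ s * r ^ s) a :=
      cfc_congr fun r hr => Real.mul_rpow hc.le (spectrum_pos r hr).le
    _ = c ^ s • a ^ s := by
      rw [cfc_const_mul _ _ _ (continuousOn_rpow_spectrum ha s), CFC.rpow_eq_cfc_real ha.nonneg]

lemma ringInverse_rpow {a : B} (ha : IsStrictlyPositive a) (s : ℝ) : a⁻¹ʳ ^ s = a ^ (-s) := by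
  rw [CFC.inverse_eq_rpow_neg_one ha, CFC.rpow_rpow a _ _ (by norm_num) ha, neg_one_mul]

lemma unitary_conj_rpow (u : unitary B) {a : B} (ha : IsStrictlyPositive a) (s : ℝ) :
    ((u : B) * a * star (u : B)) ^ s = (u : B) * a ^ s * star (u : B) := by
  have conj_nonneg : 0 ≤ (u : B) * a * star (u : B) := star_right_conjugate_nonneg ha.nonneg _
  have map_cfc := StarAlgHomClass.map_cfc (S := ℝ) (Unitary.conjStarAlgAut ℝ B u)
    (fun r : ℝ => r ^ s) a (hf := continuousOn_rpow_spectrum ha s)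
    (hφ := by
      change Continuous fun b => (u : B) * b * star (u : B)
      fun_prop)
    (ha := ha.isSelfAdjoint) (hφa := conj_nonneg.isSelfAdjoint)
  rw [CFC.rpow_eq_cfc_real conj_nonneg, CFC.rpow_eq_cfc_real ha.nonneg]
  exact map_cfc.symm

lemma exists_eq_unitary_mul_sqrt {m : B} (hm : IsUnit m) :
    ∃ u : unitary B, m = u * CFC.sqrt (star m * m) := by
  set p := star m * m
  have p_pos : IsStrictlyPositive p := (hm.star.mul hm).isStrictlyPositive (star_mul_self_nonneg m)
  have sqrt_inverse_unit : IsUnit (CFC.sqrt p⁻¹ʳ) := p_pos.ringInverse.sqrt.isUnit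
  have star_mul_self : star (m * CFC.sqrt p⁻¹ʳ) * (m * CFC.sqrt p⁻¹ʳ) = 1 := by
    calc star (m * CFC.sqrt p⁻¹ʳ) * (m * CFC.sqrt p⁻¹ʳ) = CFC.conjSqrt p⁻¹ʳ p := by
          rw [star_mul, (CFC.sqrt_nonneg p⁻¹ʳ).star_eq, CFC.conjSqrt_apply]
          simp only [p, mul_assoc]
      _ = 1 := CFC.conjSqrt_ringInverse_self p p_pos
  refine ⟨⟨m * CFC.sqrt p⁻¹ʳ,
    (hm.mul sqrt_inverse_unit).mem_unitary_iff_star_mul_self.2 star_mul_self⟩, ?_⟩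
  rw [mul_assoc, CFC.sqrt_ringInverse, Ring.inverse_mul_cancel _ p_pos.sqrt.isUnit, mul_one]

lemma star_mul_rpow_mul_self {m : B} (hm : IsUnit m) (s : ℝ) :
    star m * (m * star m) ^ s * m = (star m * m) ^ (s + 1) := by
  obtain ⟨u, hu⟩ := exists_eq_unitary_mul_sqrt hm
  set p := star m * m
  have p_pos : IsStrictlyPositive p := (hm.star.mul hm).isStrictlyPositive (star_mul_self_nonneg m)
  have star_m : star m = CFC.sqrt p * star (u : B) := by
    rw [hu, star_mul, (CFC.sqrt_nonneg p).star_eq]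
  have m_star : m * star m = u * p * star (u : B) := by
    calc m * star m = u * (CFC.sqrt p * CFC.sqrt p) * star (u : B) := by
          rw [← mul_assoc, ← hu, mul_assoc, ← star_m]
      _ = u * p * star (u : B) := by rw [CFC.sqrt_mul_sqrt_self p p_pos.nonneg]
  calc star m * (m * star m) ^ s * m
      = CFC.sqrt p * star (u : B) * (u * p ^ s * star (u : B)) * (u * CFC.sqrt p) := by
        rw [← unitary_conj_rpow u p_pos, ← m_star, ← star_m, ← hu]
    _ = CFC.sqrt p * (star (u : B) * u) * p ^ s * (star (u : B) * u) * CFC.sqrt p := by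
        simp only [mul_assoc]
    _ = p ^ (1 / 2 : ℝ) * p ^ s * p ^ (1 / 2 : ℝ) := by
        rw [Unitary.coe_star_mul_self, mul_one, mul_one, CFC.sqrt_eq_rpow]
    _ = p ^ (s + 1) := by
        rw [← CFC.rpow_add p_pos.isUnit, ← CFC.rpow_add p_pos.isUnit]
        ring_nf

end Powers

section CStarAlgebra

open Filter Topology
open scoped Ring

lemma tendsto_pow_mul_const {K : ℝ} (hK₀ : 0 ≤ K) (hK₁ : K < 1) (r : ℝ) :
    Tendsto (fun n : ℕ => K ^ n * r) atTop (𝓝 0) := by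
  simpa only [zero_mul] using (tendsto_pow_atTop_nhds_zero_of_lt_one hK₀ hK₁).mul_const r

variable {B : Type*} [CStarAlgebra B] [PartialOrder B]

/-- `f` maps the strictly positive cone into itself and is Lipschitz with constant `K` for
Thompson's metric. -/
structure ThompsonLipschitzWith (K : ℝ) (f : B → B) : Prop where
  isStrictlyPositive {x : B} : IsStrictlyPositive x → IsStrictlyPositive (f x)
  thompsonDistLE {r : ℝ} {x y : B} : IsStrictlyPositive x → IsStrictlyPositive y →
    ThompsonDistLE r x y → ThompsonDistLE (K * r) (f x) (f y)

namespace ThompsonLipschitzWith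

variable {K : ℝ} {f : B → B}

lemma iterate (hf : ThompsonLipschitzWith K f) (n : ℕ) : ThompsonLipschitzWith (K ^ n) f^[n] := by
  induction n with
  | zero => exact ⟨id, fun _ _ h => by simpa using h⟩
  | succ n ih =>
    rw [Function.iterate_succ', pow_succ']
    refine ⟨hf.isStrictlyPositive ∘ ih.isStrictlyPositive, fun hx hy h => ?_⟩
    rw [mul_assoc]
    exact hf.thompsonDistLE (ih.isStrictlyPositive hx) (ih.isStrictlyPositive hy)
      (ih.thompsonDistLE hx hy h)

end ThompsonLipschitzWith

variable [StarOrderedRing B]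

namespace ThompsonDistLE

variable {r : ℝ} {x y : B}

lemma isStrictlyPositive (hx : IsStrictlyPositive x) (h : ThompsonDistLE r x y) :
    IsStrictlyPositive y :=
  (hx.smul (Real.exp_pos (-r))).of_le h.exp_neg_smul_le

lemma norm_sub_le (h : ThompsonDistLE r x y) :
    ‖x - y‖ ≤ (|Real.exp r - Real.exp (-r)| + |Real.exp r - 1|) * ‖x‖ := by
  have norm_gap : ‖Real.exp r • x - y‖ ≤ |Real.exp r - Real.exp (-r)| * ‖x‖ := by
    rw [← Real.norm_eq_abs, ← norm_smul, sub_smul]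
    exact CStarAlgebra.norm_le_norm_of_nonneg_of_le (sub_nonneg.2 h.2)
      (sub_le_sub_left h.exp_neg_smul_le _)
  have norm_scaling : ‖Real.exp r • x - x‖ = |Real.exp r - 1| * ‖x‖ := by
    rw [← Real.norm_eq_abs, ← norm_smul, sub_smul, one_smul]
  calc ‖x - y‖ = ‖(Real.exp r • x - y) - (Real.exp r • x - x)‖ := by rw [sub_sub_sub_cancel_left]
    _ ≤ ‖Real.exp r • x - y‖ + ‖Real.exp r • x - x‖ := _root_.norm_sub_le _ _
    _ ≤ (|Real.exp r - Real.exp (-r)| + |Real.exp r - 1|) * ‖x‖ := by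
      rw [norm_scaling, add_mul]
      gcongr

/-- The strictly positive cone is complete for Thompson's metric. -/
lemma exists_limit {x : ℕ → B} {ε : ℕ → ℝ} (hx : IsStrictlyPositive (x 0))
    (hε : Tendsto ε atTop (𝓝 0))
    (h : ∀ n m, n ≤ m → ThompsonDistLE (ε n) (x n) (x m)) :
    ∃ z, IsStrictlyPositive z ∧ ∀ n, ThompsonDistLE (ε n) (x n) z := by
  have norm_bound (n : ℕ) : ‖x n‖ ≤ ‖Real.exp (ε 0) • x 0‖ :=
    CStarAlgebra.norm_le_norm_of_nonneg_of_le
      ((h 0 n n.zero_le).isStrictlyPositive hx).nonneg (h 0 n n.zero_le).2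
  let δ (r : ℝ) : ℝ :=
    (|Real.exp r - Real.exp (-r)| + |Real.exp r - 1|) * ‖Real.exp (ε 0) • x 0‖
  have δ_tendsto : Tendsto (fun n => δ (ε n)) atTop (𝓝 0) := by
    have : Continuous δ := by fun_prop
    exact (this.tendsto' 0 0 (by simp [δ])).comp hε
  have cauchy : CauchySeq x := cauchySeq_of_le_tendsto_0' _ (fun n m hnm => by
    rw [dist_eq_norm]
    exact (h n m hnm).norm_sub_le.trans
      (mul_le_mul_of_nonneg_left (norm_bound n) (by positivity))) δ_tendsto
  obtain ⟨z, hz⟩ := cauchySeq_tendsto_of_complete cauchy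
  have hxz (n : ℕ) : ThompsonDistLE (ε n) (x n) z :=
    of_tendsto hz (eventually_atTop.2 ⟨n, h n⟩)
  exact ⟨z, (hxz 0).isStrictlyPositive hx, hxz⟩

end ThompsonDistLE

lemma le_norm_conjSqrt_smul {x y : B} (hx : IsSelfAdjoint x) (hy : IsStrictlyPositive y) :
    x ≤ ‖CFC.conjSqrt y⁻¹ʳ x‖ • y := by
  have : IsSelfAdjoint (CFC.conjSqrt y⁻¹ʳ x) := by
    rw [CFC.conjSqrt_apply]
    cfc_tac
  calc x = CFC.conjSqrt y (CFC.conjSqrt y⁻¹ʳ x) := (CFC.conjSqrt_conjSqrt_ringInverse y x).symm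
    _ ≤ CFC.conjSqrt y (algebraMap ℝ B ‖CFC.conjSqrt y⁻¹ʳ x‖) :=
      CFC.conjSqrt_le_conjSqrt this.le_algebraMap_norm_self
    _ = ‖CFC.conjSqrt y⁻¹ʳ x‖ • y := by
      rw [Algebra.algebraMap_eq_smul_one, map_smul, CFC.conjSqrt_one y]

lemma exists_thompsonDistLE {x y : B} (hx : IsStrictlyPositive x) (hy : IsStrictlyPositive y) :
    ∃ r, 0 ≤ r ∧ ThompsonDistLE r x y := by
  set a := ‖CFC.conjSqrt y⁻¹ʳ x‖
  set b := ‖CFC.conjSqrt x⁻¹ʳ y‖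
  have le_exp {c : ℝ} (hc : c ≤ max a b) : c ≤ Real.exp (max a b) := by
    linarith [Real.add_one_le_exp (max a b)]
  refine ⟨max a b, (norm_nonneg _).trans (le_max_left _ _),
    (le_norm_conjSqrt_smul hx.isSelfAdjoint hy).trans ?_,
    (le_norm_conjSqrt_smul hy.isSelfAdjoint hx).trans ?_⟩
  · exact smul_le_smul_of_nonneg_right (le_exp (le_max_left _ _)) hy.nonneg
  · exact smul_le_smul_of_nonneg_right (le_exp (le_max_right _ _)) hx.nonneg

namespace ThompsonLipschitzWith

variable {K : ℝ} {f : B → B}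

lemma exists_forall_thompsonDistLE_iterate (hf : ThompsonLipschitzWith K f) (hK : K < 1) {x : B}
    (hx : IsStrictlyPositive x) : ∃ R, ∀ n, ThompsonDistLE R x (f^[n] x) := by
  obtain ⟨r, hr, hxf⟩ := exists_thompsonDistLE hx (hf.isStrictlyPositive hx)
  have hK' : 0 < 1 - K := sub_pos.2 hK
  -- This radius makes the ball around `x` invariant: `r + K * (r / (1 - K)) = r / (1 - K)`.
  refine ⟨r / (1 - K), fun n => ?_⟩
  induction n with
  | zero => exact .refl (div_nonneg hr hK'.le) hx.nonneg
  | succ n ih =>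
    rw [Function.iterate_succ_apply']
    convert hxf.trans (hf.thompsonDistLE hx ((hf.iterate n).isStrictlyPositive hx) ih) using 1
    field_simp
    ring

lemma exists_fixedPoint (hf : ThompsonLipschitzWith K f) (hK₀ : 0 ≤ K) (hK₁ : K < 1) :
    ∃ x, IsStrictlyPositive x ∧ f x = x := by
  have one_pos : IsStrictlyPositive (1 : B) := isStrictlyPositive_one
  obtain ⟨R, hR⟩ := hf.exists_forall_thompsonDistLE_iterate hK₁ one_pos
  obtain ⟨z, hz, hlim⟩ := ThompsonDistLE.exists_limit (x := fun n => f^[n] 1) one_pos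
    (tendsto_pow_mul_const hK₀ hK₁ R) fun n m hnm => by
      have := (hf.iterate n).thompsonDistLE one_pos
        ((hf.iterate (m - n)).isStrictlyPositive one_pos) (hR (m - n))
      rwa [← Function.iterate_add_apply, Nat.add_sub_cancel' hnm] at this
  have near_fixed (n : ℕ) : ThompsonDistLE (K ^ (n + 1) * (2 * R)) (f z) z := by
    have to_fz := hf.thompsonDistLE ((hf.iterate n).isStrictlyPositive one_pos) hz (hlim n)
    rw [← Function.iterate_succ_apply' f] at to_fz
    convert to_fz.symm.trans (hlim (n + 1)) using 1
    ring
  exact ⟨z, hz, ThompsonDistLE.eq_of_tendsto_zero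
    ((tendsto_pow_mul_const hK₀ hK₁ _).comp (tendsto_add_atTop_nat 1)) near_fixed⟩

lemma fixedPoint_unique (hf : ThompsonLipschitzWith K f) (hK₀ : 0 ≤ K) (hK₁ : K < 1) {x y : B}
    (hx : IsStrictlyPositive x) (hy : IsStrictlyPositive y) (hfx : f x = x) (hfy : f y = y) :
    x = y := by
  obtain ⟨r, -, h⟩ := exists_thompsonDistLE hx hy
  refine ThompsonDistLE.eq_of_tendsto_zero (tendsto_pow_mul_const hK₀ hK₁ r) fun n => ?_
  simpa only [Function.iterate_fixed hfx, Function.iterate_fixed hfy] using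
    (hf.iterate n).thompsonDistLE hx hy h

end ThompsonLipschitzWith

namespace ThompsonDistLE

variable {r s : ℝ} {x y : B}

lemma rpow_of_nonneg (hs : s ∈ Set.Icc (0 : ℝ) 1) (hx : IsStrictlyPositive x)
    (hy : IsStrictlyPositive y) (h : ThompsonDistLE r x y) :
    ThompsonDistLE (s * r) (x ^ s) (y ^ s) := by
  have rpow_le {x y : B} (hy : IsStrictlyPositive y) (hxy : x ≤ Real.exp r • y) :
      x ^ s ≤ Real.exp (s * r) • y ^ s := by
    rw [mul_comm s, Real.exp_mul, ← smul_rpow (Real.exp_pos r) hy]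
    exact CFC.rpow_le_rpow hs hxy
  exact ⟨rpow_le hy h.1, rpow_le hx h.2⟩

protected lemma ringInverse (hx : IsStrictlyPositive x) (hy : IsStrictlyPositive y)
    (h : ThompsonDistLE r x y) : ThompsonDistLE r x⁻¹ʳ y⁻¹ʳ := by
  have inverse_le {x y : B} (hx : IsStrictlyPositive x) (hxy : Real.exp (-r) • x ≤ y) :
      y⁻¹ʳ ≤ Real.exp r • x⁻¹ʳ := by
    have exp_pos := Real.exp_pos (-r)
    have := CStarAlgebra.ringInverse_le_ringInverse hxy (hx.smul exp_pos)
    rwa [CFC.inverse_eq_rpow_neg_one (hx.smul exp_pos), smul_rpow exp_pos hx, Real.rpow_neg_one,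
      Real.exp_neg, inv_inv, ← CFC.inverse_eq_rpow_neg_one hx] at this
  exact ⟨inverse_le hy h.symm.exp_neg_smul_le, inverse_le hx h.exp_neg_smul_le⟩

lemma rpow (hs_le : |s| ≤ 1) (hx : IsStrictlyPositive x) (hy : IsStrictlyPositive y)
    (h : ThompsonDistLE r x y) : ThompsonDistLE (|s| * r) (x ^ s) (y ^ s) := by
  rcases abs_choice s with hs | hs
  · rw [hs] at hs_le ⊢
    exact h.rpow_of_nonneg ⟨hs ▸ abs_nonneg s, hs_le⟩ hx hy
  · have inverse_rpow := (h.ringInverse hx hy).rpow_of_nonneg ⟨abs_nonneg s, hs_le⟩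
      hx.ringInverse hy.ringInverse
    rwa [ringInverse_rpow hx, ringInverse_rpow hy, hs, neg_neg, ← hs] at inverse_rpow

end ThompsonDistLE

section WeightedGeometricMean

/-- The weighted geometric mean `x #_t a` of strictly positive elements of a C⋆-algebra;
`CFC.conjSqrt c b` is `c^{1/2} b c^{1/2}`. -/
noncomputable def weightedGeometricMean (x a : B) (t : ℝ) : B :=
  CFC.conjSqrt x (CFC.conjSqrt x⁻¹ʳ a ^ t)

lemma isStrictlyPositive_weightedGeometricMean {x a : B} (hx : IsStrictlyPositive x)
    (ha : IsStrictlyPositive a) (t : ℝ) : IsStrictlyPositive (weightedGeometricMean x a t) := by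
  rw [weightedGeometricMean, CFC.isStrictlyPositive_conjSqrt_iff x _ hx]
  exact .rpow _ t ((CFC.isStrictlyPositive_conjSqrt_iff _ _ hx.ringInverse).2 ha)

lemma weightedGeometricMean_symm {x a : B} (hx : IsStrictlyPositive x) (ha : IsStrictlyPositive a)
    (t : ℝ) : weightedGeometricMean x a t = weightedGeometricMean a x (1 - t) := by
  set m := CFC.sqrt a * CFC.sqrt x⁻¹ʳ with hm
  have m_unit : IsUnit m := ha.sqrt.isUnit.mul hx.ringInverse.sqrt.isUnit
  have star_m : star m = CFC.sqrt x⁻¹ʳ * CFC.sqrt a := by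
    rw [star_mul, (CFC.sqrt_nonneg a).star_eq, (CFC.sqrt_nonneg x⁻¹ʳ).star_eq]
  have conj_conj (c : B) : CFC.conjSqrt x⁻¹ʳ (CFC.conjSqrt a c) = star m * c * m := by
    rw [star_m]
    simp only [hm, CFC.conjSqrt_apply, mul_assoc]
  have star_mul_m : star m * m = CFC.conjSqrt x⁻¹ʳ a := by
    rw [← mul_one (star m), ← conj_conj, CFC.conjSqrt_one a]
  have m_mul_star : m * star m = (CFC.conjSqrt a⁻¹ʳ x)⁻¹ʳ := by
    calc m * star m = CFC.sqrt a * (CFC.sqrt x⁻¹ʳ * CFC.sqrt x⁻¹ʳ) * CFC.sqrt a := by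
          rw [star_m]
          simp only [hm, mul_assoc]
      _ = CFC.conjSqrt a x⁻¹ʳ := by
          rw [CFC.sqrt_mul_sqrt_self _ hx.ringInverse.nonneg, CFC.conjSqrt_apply]
      _ = (CFC.conjSqrt a⁻¹ʳ x)⁻¹ʳ := by
          rw [CFC.ringInverse_conjSqrt _ _ ha.ringInverse, Ring.inverse_inverse ha.isUnit]
  calc weightedGeometricMean x a t = CFC.conjSqrt x ((star m * m) ^ (t - 1 + 1)) := by
        rw [star_mul_m, sub_add_cancel, weightedGeometricMean]
    _ = CFC.conjSqrt x (star m * (m * star m) ^ (t - 1) * m) := by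
        rw [star_mul_rpow_mul_self m_unit]
    _ = CFC.conjSqrt x (CFC.conjSqrt x⁻¹ʳ (CFC.conjSqrt a ((m * star m) ^ (t - 1)))) := by
        rw [conj_conj]
    _ = CFC.conjSqrt a ((m * star m) ^ (t - 1)) := CFC.conjSqrt_conjSqrt_ringInverse x _ hx
    _ = weightedGeometricMean a x (1 - t) := by
        rw [m_mul_star, ringInverse_rpow, neg_sub, weightedGeometricMean]
        exact (CFC.isStrictlyPositive_conjSqrt_iff _ _ ha.ringInverse).2 hx

lemma ThompsonDistLE.weightedGeometricMean_right {r s : ℝ} {a x y : B} (hs : |s| ≤ 1)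
    (ha : IsStrictlyPositive a) (hx : IsStrictlyPositive x) (hy : IsStrictlyPositive y)
    (h : ThompsonDistLE r x y) :
    ThompsonDistLE (|s| * r) (weightedGeometricMean a x s) (weightedGeometricMean a y s) := by
  have conj_pos {z : B} (hz : IsStrictlyPositive z) : IsStrictlyPositive (CFC.conjSqrt a⁻¹ʳ z) :=
    (CFC.isStrictlyPositive_conjSqrt_iff _ _ ha.ringInverse).2 hz
  have conj_dist := h.map (CFC.conjSqrt a⁻¹ʳ).toLinearMap CFC.conjSqrt_monotone
  exact (conj_dist.rpow hs (conj_pos hx) (conj_pos hy)).map (CFC.conjSqrt a).toLinearMap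
    CFC.conjSqrt_monotone

lemma thompsonLipschitzWith_sum_weightedGeometricMean {ι : Type*} [Fintype ι] [Nonempty ι]
    {a : ι → B} (ha : ∀ i, IsStrictlyPositive (a i)) {w : ι → ℝ} (hw : ∀ i, 0 < w i) {t : ℝ}
    (ht : |1 - t| ≤ 1) :
    ThompsonLipschitzWith |1 - t| fun x => ∑ i, w i • weightedGeometricMean x (a i) t where
  isStrictlyPositive {x} hx := by
    have summand_pos (i : ι) : IsStrictlyPositive (w i • weightedGeometricMean x (a i) t) :=
      (isStrictlyPositive_weightedGeometricMean hx (ha i) t).smul (hw i)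
    obtain ⟨i⟩ := ‹Nonempty ι›
    exact (summand_pos i).of_le (Finset.single_le_sum
      (f := fun j => w j • weightedGeometricMean x (a j) t)
      (fun j _ => (summand_pos j).nonneg) (Finset.mem_univ i))
  thompsonDistLE {r x y} hx hy h := by
    refine .sum_smul (fun i _ => (hw i).le) fun i _ => ?_
    rw [weightedGeometricMean_symm hx (ha i), weightedGeometricMean_symm hy (ha i)]
    exact h.weightedGeometricMean_right ht (ha i) hx hy

theorem power_mean_exists_unique_general {ι : Type*} [Fintype ι] [Nonempty ι] {a : ι → B}
    (ha : ∀ i, IsStrictlyPositive (a i)) {w : ι → ℝ} (hw : ∀ i, 0 < w i) {t : ℝ}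
    (ht : t ∈ Set.Ioo (0 : ℝ) 2) :
    ∃! x : B, IsStrictlyPositive x ∧ x = ∑ i, w i • weightedGeometricMean x (a i) t := by
  have ht' : |1 - t| < 1 := abs_lt.2 ⟨by linarith [ht.2], by linarith [ht.1]⟩
  have contraction := thompsonLipschitzWith_sum_weightedGeometricMean ha hw ht'.le
  obtain ⟨x, hx, x_fixed⟩ := contraction.exists_fixedPoint (abs_nonneg _) ht'
  exact ⟨x, ⟨hx, x_fixed.symm⟩, fun y ⟨hy, y_fixed⟩ =>
    contraction.fixedPoint_unique (abs_nonneg _) ht' hy hx y_fixed.symm x_fixed⟩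

end WeightedGeometricMean

end CStarAlgebra

section Matrices

open scoped MatrixOrder Matrix.Norms.L2Operator

variable {m : ℕ} {A X : Matrix (Fin m) (Fin m) ℂ}

lemma matFun_eq_cfc (f : ℝ → ℝ) (hA : A.IsHermitian) : matFun f A = cfc f A := by
  rw [matFun, dif_pos hA, hA.cfc_eq, Matrix.IsHermitian.cfc, Unitary.conjStarAlgAut_apply]
  rfl

lemma mpow_eq_rpow (hA : 0 ≤ A) (t : ℝ) : mpow A t = A ^ t := by
  rw [mpow, matFun_eq_cfc _ hA.isSelfAdjoint, CFC.rpow_eq_cfc_real hA]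

lemma msqrt_eq_sqrt (hA : 0 ≤ A) : msqrt A = CFC.sqrt A := by
  rw [msqrt, matFun_eq_cfc _ hA.isSelfAdjoint, CFC.sqrt_eq_real_sqrt A hA, cfcₙ_eq_cfc]

open scoped Ring in
lemma wgmean_eq_weightedGeometricMean (hX : IsStrictlyPositive X) (hA : 0 ≤ A) (t : ℝ) :
    wgmean X A t = weightedGeometricMean X A t := by
  have inv_msqrt : (msqrt X)⁻¹ = CFC.sqrt X⁻¹ʳ := by
    rw [msqrt_eq_sqrt hX.nonneg, CFC.sqrt_ringInverse, Matrix.nonsing_inv_eq_ringInverse]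
  have conj_nonneg : 0 ≤ CFC.conjSqrt X⁻¹ʳ A := by
    simpa only [map_zero] using CFC.conjSqrt_le_conjSqrt (c := X⁻¹ʳ) hA
  rw [wgmean, inv_msqrt, msqrt_eq_sqrt hX.nonneg, ← CFC.conjSqrt_apply, ← CFC.conjSqrt_apply,
    mpow_eq_rpow conj_nonneg, weightedGeometricMean]

lemma posDef_and_eq_sum_wgmean_iff {ι : Type*} [Fintype ι] {A : ι → Matrix (Fin m) (Fin m) ℂ}
    (hA : ∀ i, 0 ≤ A i) (w : ι → ℝ) (t : ℝ) :
    X.PosDef ∧ X = ∑ i, w i • wgmean X (A i) t ↔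
      IsStrictlyPositive X ∧ X = ∑ i, w i • weightedGeometricMean X (A i) t := by
  rw [← Matrix.isStrictlyPositive_iff_posDef]
  refine and_congr_right fun hX => ?_
  simp only [wgmean_eq_weightedGeometricMean hX (hA _)]

end Matrices

/-- Power means: for each `t ∈ (0,1]`, the equation `X = Σᵢ wᵢ (X #_t Aᵢ)` has a unique
positive definite solution (the `t`-weighted power mean). -/
theorem power_mean_exists_unique {m n : ℕ} (A : Fin n → Matrix (Fin m) (Fin m) ℂ)
    (hA : ∀ i, (A i).PosDef) (w : Fin n → ℝ) (hw : ∀ i, 0 < w i) (hw1 : ∑ i, w i = 1)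
    (t : ℝ) (ht : t ∈ Set.Ioc (0 : ℝ) 1) :
    ∃! X : Matrix (Fin m) (Fin m) ℂ, X.PosDef ∧ X = ∑ i, w i • wgmean X (A i) t := by
  open scoped MatrixOrder Matrix.Norms.L2Operator in
  have A_pos (i : Fin n) : IsStrictlyPositive (A i) := Matrix.isStrictlyPositive_iff_posDef.2 (hA i)
  have index_nonempty : Nonempty (Fin n) := Finset.univ_nonempty_iff.1 <|
    Finset.nonempty_of_sum_ne_zero (hw1.trans_ne one_ne_zero)
  simpa only [posDef_and_eq_sum_wgmean_iff fun i => (A_pos i).nonneg] using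
    power_mean_exists_unique_general A_pos hw ⟨ht.1, ht.2.trans_lt one_lt_two⟩
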